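/- A language L ⊆ A⁺ over a finite alphabet A is FO(<)-definable if and only if it is LTL-definable. -/

import Mathlib

open FirstOrder

/-! ### FO(<)-definability of word languages -/

/-- Relation symbols of the word signature `σ_A`: a unary predicate for each letter
`a ∈ A` and the binary predicate `<`. -/
def WordRel (A : Type) : ℕ → Type
  | 1 => A
  | 2 => Unit
  | _ => Empty

/-- The first-order signature `σ_A` of words over `A`. -/
def wordLang (A : Type) : FirstOrder.Language := ⟨fun _ => Empty, WordRel A⟩

/-- A word regarded as a first-order `σ_A`-structure on its set of positions. -/
def wordStructure {A : Type} (w : List A) : (wordLang A).Structure (Fin w.length) where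
  funMap := fun f _ => Empty.elim f
  RelMap := fun {n} r =>
    match n, r with
    | 1, a => fun v => w.get (v 0) = a
    | 2, _ => fun v => v 0 < v 1

/-- Truth of a `σ_A`-sentence in a word. -/
def SatWord {A : Type} (w : List A) (θ : (wordLang A).Sentence) : Prop :=
  letI := wordStructure w
  (Fin w.length) ⊨ θ

/-- A language `L ⊆ A⁺` is FO(<)-definable if it is the set of nonempty words
satisfying some `σ_A`-sentence. -/
def FODefinable {A : Type} (L : Set (List A)) : Prop :=
  ∃ θ : (wordLang A).Sentence, L = {w : List A | w ≠ [] ∧ SatWord w θ}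

/-! ### LTL-definability -/

/-- LTL-formulas over propositional variables of type `P`. -/
inductive LTL (P : Type) : Type
  | top : LTL P
  | var : P → LTL P
  | and : LTL P → LTL P → LTL P
  | not : LTL P → LTL P
  | next : LTL P → LTL P
  | ev : LTL P → LTL P
  | untl : LTL P → LTL P → LTL P

/-- A finite temporal model `({0,…,ℓ}, <, V)` over propositional variables `P`. -/
structure TModel (P : Type) : Type where
  len : ℕ
  V : P → ℕ → Prop

/-- Truth of an LTL-formula at a time point of a finite temporal model. -/
def LTL.sat {P : Type} (M : TModel P) : ℕ → LTL P → Prop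
  | _, .top => True
  | n, .var p => M.V p n
  | n, .and φ ψ => LTL.sat M n φ ∧ LTL.sat M n ψ
  | n, .not φ => ¬ LTL.sat M n φ
  | n, .next φ => n < M.len ∧ LTL.sat M (n + 1) φ
  | n, .ev φ => ∃ m, n < m ∧ m ≤ M.len ∧ LTL.sat M m φ
  | n, .untl φ ψ => ∃ m, n < m ∧ m ≤ M.len ∧ LTL.sat M m φ ∧
      ∀ k, n < k → k < m → LTL.sat M k ψ

/-- The nonempty word `a :: l` regarded as a finite temporal model over the letters of
`A`, where letter `b` is true at position `i` iff the `i`-th letter of the word is `b`. -/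
def wModel {A : Type} (a : A) (l : List A) : TModel A where
  len := l.length
  V := fun b n => (a :: l)[n]? = some b

/-- A language `L ⊆ A⁺` is LTL-definable if it consists of the nonempty words
satisfying some LTL-formula (over the letters of `A`) at the initial position. -/
def LTLDefinable {A : Type} (L : Set (List A)) : Prop :=
  ∃ φ : LTL A, L = {w : List A | ∃ (a : A) (l : List A), w = a :: l ∧
    LTL.sat (wModel a l) 0 φ}


namespace Kamp

/-! ### Aperiodic monoids -/

def Aper (M : Type) [Monoid M] : Prop := ∀ m : M, ∃ n : ℕ, m ^ (n + 1) = m ^ n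

theorem pow_stable {M : Type} [Monoid M] {m : M} {n : ℕ} (h : m ^ (n + 1) = m ^ n) {k : ℕ}
    (hk : n ≤ k) : m ^ (k + 1) = m ^ k := by
  obtain ⟨d, rfl⟩ := Nat.exists_eq_add_of_le hk
  rw [show n + d + 1 = (n + 1) + d by omega, pow_add, h, ← pow_add]

theorem Aper.prod {M N : Type} [Monoid M] [Monoid N] (hM : Aper M) (hN : Aper N) :
    Aper (M × N) := by
  rintro ⟨a, b⟩
  obtain ⟨n, hn⟩ := hM a
  obtain ⟨k, hk⟩ := hN b
  refine ⟨max n k, ?_⟩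
  ext
  · exact pow_stable hn (le_max_left _ _)
  · exact pow_stable hk (le_max_right _ _)

/-- The monoid used for existential quantification. -/
@[ext] structure Blk (M : Type) where
  fst : M
  snd : Set M

instance (M : Type) [Finite M] : Finite (Blk M) :=
  Finite.of_injective (fun b : Blk M => (b.fst, b.snd)) (by
    rintro ⟨a, b⟩ ⟨c, d⟩ h
    simpa using h)

instance (M : Type) [Monoid M] : Monoid (Blk M) where
  mul p q := ⟨p.fst * q.fst, {z | (∃ y ∈ q.snd, z = p.fst * y) ∨ ∃ x ∈ p.snd, z = x * q.fst}⟩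
  one := ⟨1, ∅⟩
  mul_assoc p q r := by
    apply Blk.ext
    · exact mul_assoc _ _ _
    · ext z
      constructor
      · rintro (⟨y, hy, rfl⟩ | ⟨x, ⟨y, hy, rfl⟩ | ⟨y, hy, rfl⟩, rfl⟩)
        · exact Or.inl ⟨_, Or.inl ⟨y, hy, rfl⟩, mul_assoc _ _ _⟩
        · exact Or.inl ⟨_, Or.inr ⟨y, hy, rfl⟩, mul_assoc _ _ _⟩
        · exact Or.inr ⟨y, hy, mul_assoc _ _ _⟩
      · rintro (⟨y, ⟨x, hx, rfl⟩ | ⟨x, hx, rfl⟩, rfl⟩ | ⟨y, hy, rfl⟩)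
        · exact Or.inl ⟨x, hx, (mul_assoc _ _ _).symm⟩
        · exact Or.inr ⟨_, Or.inl ⟨x, hx, rfl⟩, (mul_assoc _ _ _).symm⟩
        · exact Or.inr ⟨_, Or.inr ⟨y, hy, rfl⟩, (mul_assoc _ _ _).symm⟩
  one_mul p := by
    apply Blk.ext
    · exact one_mul _
    · ext z
      constructor
      · rintro (⟨y, hy, rfl⟩ | ⟨x, hx, rfl⟩)
        · simpa using (one_mul y).symm ▸ hy
        · exact hx.elim
      · intro hz
        exact Or.inl ⟨z, hz, (one_mul z).symm⟩
  mul_one p := by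
    apply Blk.ext
    · exact mul_one _
    · ext z
      constructor
      · rintro (⟨y, hy, rfl⟩ | ⟨x, hx, rfl⟩)
        · exact hy.elim
        · simpa using (mul_one x).symm ▸ hx
      · intro hz
        exact Or.inr ⟨z, hz, (mul_one z).symm⟩

theorem Blk.mul_def {M : Type} [Monoid M] (p q : Blk M) : p * q =
    ⟨p.fst * q.fst, {z | (∃ y ∈ q.snd, z = p.fst * y) ∨ ∃ x ∈ p.snd, z = x * q.fst}⟩ := rfl

theorem Blk.one_def {M : Type} [Monoid M] : (1 : Blk M) = ⟨1, ∅⟩ := rfl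

theorem Blk.pow_eq {M : Type} [Monoid M] (p : Blk M) (k : ℕ) : p ^ k =
    ⟨p.fst ^ k, {z | ∃ i j, i + j + 1 = k ∧ ∃ x ∈ p.snd, z = p.fst ^ i * x * p.fst ^ j}⟩ := by
  induction k with
  | zero => simp [Blk.one_def]
  | succ k ih =>
    rw [pow_succ, ih, Blk.mul_def]
    apply Blk.ext
    · exact (pow_succ _ _).symm
    · ext z
      constructor
      · rintro (⟨y, hy, rfl⟩ | ⟨_, ⟨i, j, hij, x, hx, rfl⟩, rfl⟩)
        · exact ⟨k, 0, by omega, y, hy, by simp⟩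
        · exact ⟨i, j + 1, by omega, x, hx, by simp [pow_succ, mul_assoc]⟩
      · rintro ⟨i, j, hij, x, hx, rfl⟩
        rcases j with _ | j
        · obtain rfl : i = k := by omega
          exact Or.inl ⟨x, hx, by simp⟩
        · exact Or.inr ⟨_, ⟨i, j, by omega, x, hx, rfl⟩, by simp [pow_succ, mul_assoc]⟩

theorem Aper.blk {M : Type} [Monoid M] (hM : Aper M) : Aper (Blk M) := by
  intro p
  obtain ⟨n, hn⟩ := hM p.fst
  refine ⟨2 * n + 1, ?_⟩
  rw [Blk.pow_eq, Blk.pow_eq]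
  apply Blk.ext
  · exact pow_stable hn (by omega)
  · ext z
    constructor
    · rintro ⟨i, j, hij, x, hx, rfl⟩
      by_cases hi : n + 1 ≤ i
      · obtain ⟨i, rfl⟩ : ∃ i', i = i' + 1 := ⟨i - 1, by omega⟩
        exact ⟨i, j, by omega, x, hx, by rw [pow_stable hn (by omega)]⟩
      · obtain ⟨j, rfl⟩ : ∃ j', j = j' + 1 := ⟨j - 1, by omega⟩
        exact ⟨i, j, by omega, x, hx, by rw [pow_stable hn (k := j) (by omega)]⟩
    · rintro ⟨i, j, hij, x, hx, rfl⟩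
      by_cases hi : n ≤ i
      · exact ⟨i + 1, j, by omega, x, hx, by rw [pow_stable hn (by omega)]⟩
      · exact ⟨i, j + 1, by omega, x, hx, by rw [pow_stable hn (k := j) (by omega)]⟩

theorem Blk.prod_ofFn {M : Type} [Monoid M] : ∀ (k : ℕ) (f g : Fin k → M),
    (List.ofFn fun i => (⟨f i, {g i}⟩ : Blk M)).prod =
    ⟨(List.ofFn f).prod,
      {z | ∃ p, z = (List.ofFn fun i => if p = i then g i else f i).prod}⟩
  | 0, f, g => by
    simp [Blk.one_def]
  | k + 1, f, g => by
    have ih := Blk.prod_ofFn k (fun i => f i.succ) (fun i => g i.succ)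
    rw [List.ofFn_succ, List.prod_cons, ih, Blk.mul_def]
    apply Blk.ext
    · simp [List.ofFn_succ]
    · ext z
      constructor
      · rintro (⟨_, ⟨p, rfl⟩, rfl⟩ | ⟨x, hx, rfl⟩)
        · refine ⟨p.succ, ?_⟩
          simp [List.ofFn_succ, Fin.succ_ne_zero]
        · obtain rfl : x = g 0 := hx
          refine ⟨0, ?_⟩
          simp [List.ofFn_succ, (Fin.succ_ne_zero _).symm]
      · rintro ⟨p, rfl⟩
        cases p using Fin.cases with
        | zero =>
          refine Or.inr ⟨g 0, rfl, ?_⟩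
          simp [List.ofFn_succ, (Fin.succ_ne_zero _).symm]
        | succ p =>
          refine Or.inl ⟨_, ⟨p, rfl⟩, ?_⟩
          simp [List.ofFn_succ, Fin.succ_ne_zero]

/-- Monoid recognizing a position with property P before one with property Q. -/
@[ext] structure Ord2 where
  p : Bool
  q : Bool
  r : Bool

instance : Finite Ord2 :=
  Finite.of_injective (fun b : Ord2 => (b.p, b.q, b.r)) (by
    rintro ⟨a, b, c⟩ ⟨d, e, f⟩ h
    simpa using h)

instance : Monoid Ord2 where
  mul x y := ⟨x.p || y.p, x.q || y.q, x.r || y.r || (x.p && y.q)⟩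
  one := ⟨false, false, false⟩
  mul_assoc := by
    rintro ⟨a, b, c⟩ ⟨a', b', c'⟩ ⟨a'', b'', c''⟩
    apply Ord2.ext
    · exact Bool.or_assoc _ _ _
    · exact Bool.or_assoc _ _ _
    · change (((c || c') || (a && b')) || c'' || ((a || a') && b'')) =
        (c || ((c' || c'') || (a' && b'')) || (a && (b' || b'')))
      revert a a' a'' b b' b'' c c' c''
      decide
  one_mul := by
    rintro ⟨a, b, c⟩
    apply Ord2.ext
    · exact Bool.false_or _
    · exact Bool.false_or _
    · change (((false || c) || (false && b))) = c
      simp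
  mul_one := by
    rintro ⟨a, b, c⟩
    apply Ord2.ext
    · exact Bool.or_false _
    · exact Bool.or_false _
    · change (((c || false) || (a && false))) = c
      simp

theorem Ord2.mul_def (x y : Ord2) :
    x * y = ⟨x.p || y.p, x.q || y.q, x.r || y.r || (x.p && y.q)⟩ := rfl

theorem Ord2.one_def : (1 : Ord2) = ⟨false, false, false⟩ := rfl

theorem Ord2.aper : Aper Ord2 := by
  rintro ⟨a, b, c⟩
  refine ⟨2, ?_⟩
  simp only [pow_succ, pow_zero, one_mul, Ord2.mul_def]
  apply Ord2.ext <;> revert a b c <;> decide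

theorem Ord2.prod_ofFn : ∀ (k : ℕ) (P Q : Fin k → Bool),
    (List.ofFn fun i => (⟨P i, Q i, false⟩ : Ord2)).prod =
    ⟨decide (∃ i, P i = true), decide (∃ i, Q i = true),
      decide (∃ i j, i < j ∧ P i = true ∧ Q j = true)⟩
  | 0, P, Q => by simp [Ord2.one_def]
  | k + 1, P, Q => by
    have ih := Ord2.prod_ofFn k (fun i => P i.succ) (fun i => Q i.succ)
    rw [List.ofFn_succ, List.prod_cons, ih, Ord2.mul_def]
    apply Ord2.ext
    · simp only [Fin.exists_fin_succ]
      simp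
    · simp only [Fin.exists_fin_succ]
      simp
    · simp only [Fin.exists_fin_succ]
      simp [Bool.or_comm]

end Kamp

namespace Kamp

/-! ### From FO to aperiodic monoids -/

open FirstOrder.Language

/-- A predicate of words with `n` marked positions recognized by a finite aperiodic monoid. -/
def Recog {A : Type} (n : ℕ) (P : (w : List A) → (Fin n → Fin w.length) → Prop) : Prop :=
  ∃ (M : Type) (_ : Monoid M) (_ : Finite M), Aper M ∧
    ∃ (h : A → (Fin n → Bool) → M) (S : Set M), ∀ w v,
      P w v ↔ (List.ofFn fun i : Fin w.length => h (w.get i) (fun j => decide (v j = i))).prod ∈ S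

theorem Recog.congr {A : Type} {n : ℕ} {P Q : (w : List A) → (Fin n → Fin w.length) → Prop}
    (hP : Recog n P) (h : ∀ w v, Q w v ↔ P w v) : Recog n Q := by
  obtain ⟨M, i1, i2, ha, g, S, hS⟩ := hP
  exact ⟨M, i1, i2, ha, g, S, fun w v => (h w v).trans (hS w v)⟩

theorem Recog.bot {A : Type} (n : ℕ) : Recog (A := A) n (fun _ _ => False) :=
  ⟨Unit, inferInstance, inferInstance, fun _ => ⟨0, rfl⟩, fun _ _ => (), ∅, by simp⟩

theorem prod_pair {M N : Type} [Monoid M] [Monoid N] (k : ℕ) (f : Fin k → M) (g : Fin k → N) :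
    (List.ofFn fun i => (f i, g i)).prod = ((List.ofFn f).prod, (List.ofFn g).prod) := by
  induction k with
  | zero => rfl
  | succ k ih => simp [List.ofFn_succ, ih]

theorem Recog.imp {A : Type} {n : ℕ} {P Q : (w : List A) → (Fin n → Fin w.length) → Prop}
    (hP : Recog n P) (hQ : Recog n Q) : Recog n (fun w v => P w v → Q w v) := by
  obtain ⟨M, i1, i2, ha, g, S, hS⟩ := hP
  obtain ⟨M', i1', i2', ha', g', S', hS'⟩ := hQ
  refine ⟨M × M', inferInstance, inferInstance, ha.prod ha', fun a x => (g a x, g' a x),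
    {z | z.1 ∈ S → z.2 ∈ S'}, fun w v => ?_⟩
  rw [prod_pair]
  exact imp_congr (hS w v) (hS' w v)

theorem Recog.all {A : Type} {n : ℕ} {P : (w : List A) → (Fin (n + 1) → Fin w.length) → Prop}
    (hP : Recog (n + 1) P) : Recog n (fun w v => ∀ p, P w (Fin.snoc v p)) := by
  obtain ⟨M, i1, i2, ha, g, S, hS⟩ := hP
  refine ⟨Blk M, inferInstance, inferInstance, ha.blk,
    fun a x => ⟨g a (Fin.snoc x false), {g a (Fin.snoc x true)}⟩, {z | z.snd ⊆ S}, fun w v => ?_⟩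
  rw [Blk.prod_ofFn]
  have key : ∀ p : Fin w.length, (fun i : Fin w.length =>
      g (w.get i) (fun j => decide ((Fin.snoc v p : Fin (n + 1) → Fin w.length) j = i))) =
      fun i => if p = i then g (w.get i) (Fin.snoc (fun j => decide (v j = i)) true)
        else g (w.get i) (Fin.snoc (fun j => decide (v j = i)) false) := by
    intro p
    funext i
    have : (fun j => decide ((Fin.snoc v p : Fin (n + 1) → Fin w.length) j = i)) =
        Fin.snoc (fun j => decide (v j = i)) (decide (p = i)) := by
      funext j
      cases j using Fin.lastCases <;> simp
    rw [this]
    by_cases hp : p = i <;> simp [hp]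
  simp only [hS, key]
  constructor
  · rintro h _ ⟨p, rfl⟩
    exact h p
  · intro h p
    exact h ⟨p, rfl⟩

theorem Recog.ordEx {A : Type} (n : ℕ) (P Q : A → (Fin n → Bool) → Bool) (S : Set Ord2) :
    Recog (A := A) n (fun w v =>
      (⟨decide (∃ i, P (w.get i) (fun j => decide (v j = i)) = true),
        decide (∃ i, Q (w.get i) (fun j => decide (v j = i)) = true),
        decide (∃ i i', i < i' ∧ P (w.get i) (fun j => decide (v j = i)) = true ∧
          Q (w.get i') (fun j => decide (v j = i')) = true)⟩ : Ord2) ∈ S) := by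
  refine ⟨Ord2, inferInstance, inferInstance, Ord2.aper, fun a x => ⟨P a x, Q a x, false⟩,
    S, fun w v => ?_⟩
  rw [Ord2.prod_ofFn]

theorem Recog.some {A : Type} (n : ℕ) (P : A → (Fin n → Bool) → Bool) :
    Recog (A := A) n (fun w v => ∃ i, P (w.get i) (fun j => decide (v j = i)) = true) :=
  (Recog.ordEx n P P {z | z.p = true}).congr (by simp)

theorem Recog.lt {A : Type} (n : ℕ) (a b : Fin n) :
    Recog (A := A) n (fun _ v => v a < v b) :=
  (Recog.ordEx n (fun _ x => x a) (fun _ x => x b) {z | z.r = true}).congr (by simp)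

theorem Recog.eq {A : Type} (n : ℕ) (a b : Fin n) :
    Recog (A := A) n (fun _ v => v a = v b) :=
  (Recog.some n (fun _ x => x a && x b)).congr (fun w v => by
    simp only [Bool.and_eq_true, decide_eq_true_eq]
    exact ⟨fun h => ⟨_, rfl, h.symm⟩, fun ⟨i, h1, h2⟩ => h1.trans h2.symm⟩)

open Classical in
theorem Recog.letter {A : Type} (n : ℕ) (a : Fin n) (c : A) :
    Recog (A := A) n (fun w v => w.get (v a) = c) :=
  (Recog.some n (fun d x => decide (d = c) && x a)).congr (by simp)

theorem term_var {A : Type} {n : ℕ} (t : (wordLang A).Term (Empty ⊕ Fin n)) :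
    ∃ i, t = Term.var (Sum.inr i) := by
  cases t with
  | var x =>
    rcases x with x | i
    · exact x.elim
    · exact ⟨i, rfl⟩
  | func f _ => exact Empty.elim f

/-- Truth of a bounded formula in a word. -/
def SatB {A : Type} {n : ℕ} (φ : (wordLang A).BoundedFormula Empty n) (w : List A)
    (v : Fin n → Fin w.length) : Prop :=
  letI := wordStructure w
  φ.Realize default v

theorem recog_formula {A : Type} {n : ℕ} (φ : (wordLang A).BoundedFormula Empty n) :
    Recog n (SatB φ) := by
  induction φ with
  | falsum => exact (Recog.bot _).congr (fun w v => Iff.rfl)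
  | @equal n t₁ t₂ =>
    obtain ⟨i, rfl⟩ := term_var t₁
    obtain ⟨j, rfl⟩ := term_var t₂
    exact (Recog.eq n i j).congr (fun w v => Iff.rfl)
  | @rel n l R ts =>
    match l, R with
    | 1, R =>
      obtain ⟨i, hi⟩ := term_var (ts 0)
      refine (Recog.letter n i R).congr (fun w v => ?_)
      change w.get (@Term.realize (wordLang A) (Fin w.length) (wordStructure w) _ (Sum.elim default v) (ts 0)) = R ↔ _
      rw [hi]
      rfl
    | 2, R =>
      obtain ⟨i, hi⟩ := term_var (ts 0)
      obtain ⟨j, hj⟩ := term_var (ts 1)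
      refine (Recog.lt n i j).congr (fun w v => ?_)
      change (@Term.realize (wordLang A) (Fin w.length) (wordStructure w) _ (Sum.elim default v) (ts 0)) < (@Term.realize (wordLang A) (Fin w.length) (wordStructure w) _ (Sum.elim default v) (ts 1)) ↔ _
      rw [hi, hj]
      rfl
  | imp _ _ ih1 ih2 => exact (ih1.imp ih2).congr (fun w v => Iff.rfl)
  | all _ ih => exact ih.all.congr (fun w v => Iff.rfl)

theorem recog_sentence {A : Type} (θ : (wordLang A).Sentence) :
    ∃ (M : Type) (_ : Monoid M) (_ : Finite M), Aper M ∧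
      ∃ (h : A → M) (S : Set M), ∀ w : List A, SatWord w θ ↔ (w.map h).prod ∈ S := by
  obtain ⟨M, i1, i2, ha, g, S, hS⟩ := recog_formula θ
  refine ⟨M, i1, i2, ha, fun a => g a default, S, fun w => ?_⟩
  have h := hS w default
  have e : (List.ofFn fun i : Fin w.length => g (w.get i)
      (fun j => decide ((default : Fin 0 → Fin w.length) j = i))) = w.map (fun a => g a default) := by
    apply List.ext_getElem
    · simp
    · intro i h1 h2
      simp only [List.getElem_ofFn, List.getElem_map]
      congr 1
      exact Subsingleton.elim _ _
  rw [e] at h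
  exact h

/-! ### From LTL to FO -/

/-- Predicates of words with `n` marked positions that are definable by a formula. -/
def Fod {A : Type} (n : ℕ) (P : (w : List A) → (Fin n → Fin w.length) → Prop) : Prop :=
  ∃ φ : (wordLang A).BoundedFormula Empty n, ∀ w v, SatB φ w v ↔ P w v

theorem Fod.congr {A : Type} {n : ℕ} {P Q : (w : List A) → (Fin n → Fin w.length) → Prop}
    (hP : Fod n P) (h : ∀ w v, Q w v ↔ P w v) : Fod n Q := by
  obtain ⟨φ, hφ⟩ := hP
  exact ⟨φ, fun w v => (hφ w v).trans (h w v).symm⟩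

theorem Fod.bot {A : Type} (n : ℕ) : Fod (A := A) n (fun _ _ => False) :=
  ⟨.falsum, fun _ _ => Iff.rfl⟩

theorem Fod.imp {A : Type} {n : ℕ} {P Q : (w : List A) → (Fin n → Fin w.length) → Prop}
    (hP : Fod n P) (hQ : Fod n Q) : Fod n (fun w v => P w v → Q w v) := by
  obtain ⟨φ, hφ⟩ := hP
  obtain ⟨ψ, hψ⟩ := hQ
  refine ⟨.imp φ ψ, fun w v => ?_⟩
  exact imp_congr (hφ w v) (hψ w v)

theorem Fod.all {A : Type} {n : ℕ} {P : (w : List A) → (Fin (n + 1) → Fin w.length) → Prop}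
    (hP : Fod (n + 1) P) : Fod n (fun w v => ∀ p, P w (Fin.snoc v p)) := by
  obtain ⟨φ, hφ⟩ := hP
  refine ⟨.all φ, fun w v => ?_⟩
  simp only [← hφ]
  exact Iff.rfl

theorem Fod.not {A : Type} {n : ℕ} {P : (w : List A) → (Fin n → Fin w.length) → Prop}
    (hP : Fod n P) : Fod n (fun w v => ¬ P w v) :=
  hP.imp (Fod.bot n)

theorem Fod.and {A : Type} {n : ℕ} {P Q : (w : List A) → (Fin n → Fin w.length) → Prop}
    (hP : Fod n P) (hQ : Fod n Q) : Fod n (fun w v => P w v ∧ Q w v) :=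
  (hP.imp hQ.not).not.congr (by simp)

theorem Fod.ex {A : Type} {n : ℕ} {P : (w : List A) → (Fin (n + 1) → Fin w.length) → Prop}
    (hP : Fod (n + 1) P) : Fod n (fun w v => ∃ p, P w (Fin.snoc v p)) :=
  hP.not.all.not.congr (by simp)

theorem Fod.lt {A : Type} (n : ℕ) (a b : Fin n) : Fod (A := A) n (fun _ v => v a < v b) :=
  ⟨.rel (l := 2) (show (wordLang A).Relations 2 from ())
    ![Term.var (Sum.inr a), Term.var (Sum.inr b)], fun _ _ => Iff.rfl⟩

theorem Fod.letter {A : Type} (n : ℕ) (a : Fin n) (c : A) :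
    Fod (A := A) n (fun w v => w.get (v a) = c) :=
  ⟨.rel (l := 1) (show (wordLang A).Relations 1 from c)
    ![Term.var (Sum.inr a)], fun _ _ => Iff.rfl⟩

/-- The temporal model of a possibly empty word. -/
def lModel {A : Type} (w : List A) : TModel A where
  len := w.length - 1
  V := fun b n => w[n]? = some b

theorem fod_ltl {A : Type} (φ : LTL A) : ∀ (n : ℕ) (i : Fin n),
    Fod n (fun w v => LTL.sat (lModel w) (v i) φ) := by
  induction φ with
  | top => exact fun n i => (Fod.bot n).not.congr (by simp [LTL.sat])
  | var a =>
    refine fun n i => (Fod.letter n i a).congr (fun w v => ?_)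
    simp [LTL.sat, lModel]
  | and _ _ ih1 ih2 => exact fun n i => (ih1 n i).and (ih2 n i)
  | not _ ih => exact fun n i => (ih n i).not
  | next φ ih =>
    intro n i
    refine ((Fod.lt (n + 1) i.castSucc (Fin.last n)).and ((ih (n + 1) (Fin.last n)).and
      ((Fod.lt (n + 2) i.castSucc.castSucc (Fin.last (n + 1))).and
        (Fod.lt (n + 2) (Fin.last (n + 1)) (Fin.last n).castSucc)).not.all)).ex.congr
      (fun w v => ?_)
    simp only [Fin.snoc_castSucc, Fin.snoc_last, LTL.sat, lModel]
    constructor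
    · rintro ⟨h1, h2⟩
      refine ⟨⟨v i + 1, by omega⟩, by simp [Fin.lt_def], h2, fun p hp => ?_⟩
      simp only [Fin.lt_def] at hp
      omega
    · rintro ⟨p, h1, h2, h3⟩
      have h4 := p.2
      have h5 : (p : ℕ) = v i + 1 := by
        by_contra h
        have h1' : (v i : ℕ) < p := h1
        exact h3 ⟨v i + 1, by omega⟩ ⟨by simp [Fin.lt_def], by simp only [Fin.lt_def]; omega⟩
      exact ⟨by omega, h5 ▸ h2⟩
  | ev φ ih =>
    intro n i
    refine ((Fod.lt (n + 1) i.castSucc (Fin.last n)).and (ih (n + 1) (Fin.last n))).ex.congr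
      (fun w v => ?_)
    simp only [Fin.snoc_castSucc, Fin.snoc_last, LTL.sat, lModel]
    constructor
    · rintro ⟨m, h1, h2, h3⟩
      exact ⟨⟨m, by omega⟩, h1, h3⟩
    · rintro ⟨p, h1, h2⟩
      exact ⟨p, h1, by omega, h2⟩
  | untl φ ψ ih1 ih2 =>
    intro n i
    refine ((Fod.lt (n + 1) i.castSucc (Fin.last n)).and ((ih1 (n + 1) (Fin.last n)).and
      ((Fod.lt (n + 2) i.castSucc.castSucc (Fin.last (n + 1))).imp
        ((Fod.lt (n + 2) (Fin.last (n + 1)) (Fin.last n).castSucc).imp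
          (ih2 (n + 2) (Fin.last (n + 1))))).all)).ex.congr
      (fun w v => ?_)
    simp only [Fin.snoc_castSucc, Fin.snoc_last, LTL.sat, lModel]
    constructor
    · rintro ⟨m, h1, h2, h3, h4⟩
      exact ⟨⟨m, by omega⟩, h1, h3, fun p hp1 hp2 => h4 p hp1 hp2⟩
    · rintro ⟨p, h1, h2, h3⟩
      exact ⟨p, h1, by omega, h2, fun k hk1 hk2 => h3 ⟨k, by omega⟩ hk1 hk2⟩

theorem fo_of_ltl {A : Type} {L : Set (List A)} (h : LTLDefinable L) : FODefinable L := by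
  obtain ⟨φ, rfl⟩ := h
  obtain ⟨θ, hθ⟩ := ((Fod.lt (A := A) 2 1 0).not.all.and (fod_ltl φ 1 0)).ex
  refine ⟨θ, ?_⟩
  ext w
  have h := hθ w default
  constructor
  · rintro ⟨a, l, rfl, hs⟩
    refine ⟨by simp, h.2 ⟨⟨0, by simp⟩, fun p hp => ?_, hs⟩⟩
    exact absurd hp (Nat.not_lt_zero _)
  · rintro ⟨hw, hs⟩
    obtain ⟨p, hp1, hp2⟩ := h.1 hs
    cases w with
    | nil => exact absurd rfl hw
    | cons a l =>
      refine ⟨a, l, rfl, ?_⟩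
      have hp : (p : ℕ) = 0 := by
        by_contra hne
        exact hp1 ⟨0, by simp⟩ (Nat.pos_of_ne_zero hne)
      have hp2' : LTL.sat (lModel (a :: l)) (p : ℕ) φ := hp2
      rw [hp] at hp2'
      exact hp2'

end Kamp

namespace Kamp

/-! ### LTL-definable languages as a closure class -/

/-- Non-strict until over the suffixes (including the empty one) of a word. -/
def Unt {A : Type} (K L : List A → Prop) : List A → Prop
  | [] => L []
  | a :: w => L (a :: w) ∨ (K (a :: w) ∧ Unt K L w)

inductive D {A : Type} : (List A → Prop) → Prop
  | univ : D (fun _ => True)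
  | letter (a : A) : D (fun w => w.head? = some a)
  | compl {K : List A → Prop} : D K → D (fun w => ¬ K w)
  | inter {K L : List A → Prop} : D K → D L → D (fun w => K w ∧ L w)
  | next {K : List A → Prop} : D K → D (fun w => ∃ a w', w = a :: w' ∧ K w')
  | unt {K L : List A → Prop} : D K → D L → D (Unt K L)

theorem D.congr {A : Type} {K L : List A → Prop} (hK : D K) (h : ∀ w, L w ↔ K w) : D L := by
  have : L = K := funext fun w => propext (h w)
  rw [this]
  exact hK

theorem D.or {A : Type} {K L : List A → Prop} (hK : D K) (hL : D L) : D (fun w => K w ∨ L w) :=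
  (hK.compl.inter hL.compl).compl.congr (fun w => by tauto)

theorem D.const {A : Type} (p : Prop) : D (fun _ : List A => p) := by
  by_cases hp : p
  · exact D.univ.congr (by simp [hp])
  · exact D.univ.compl.congr (by simp [hp])

theorem D.exFin {A ι : Type} [Finite ι] {K : ι → List A → Prop} (h : ∀ i, D (K i)) :
    D (fun w => ∃ i, K i w) := by
  classical
  have := Fintype.ofFinite ι
  have key : ∀ s : Finset ι, D (fun w => ∃ i ∈ s, K i w) := by
    intro s
    induction s using Finset.induction_on with
    | empty => exact (D.const False).congr (by simp)
    | insert a s _ ih => exact ((h a).or ih).congr (by simp)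
  exact (key Finset.univ).congr (by simp)

theorem unt_iff {A : Type} (K L : List A → Prop) : ∀ w : List A,
    Unt K L w ↔ ∃ m, m ≤ w.length ∧ L (w.drop m) ∧ ∀ k, k < m → K (w.drop k)
  | [] => by
    constructor
    · intro h
      exact ⟨0, by simp, h, by simp⟩
    · rintro ⟨m, hm, h, _⟩
      simpa [Unt] using h
  | a :: w => by
    have ih := unt_iff K L w
    simp only [Unt]
    rw [ih]
    constructor
    · rintro (h | ⟨h, m, hm, h1, h2⟩)
      · exact ⟨0, by simp, h, by simp⟩
      · refine ⟨m + 1, by simpa using hm, by simpa using h1, ?_⟩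
        rintro (_ | k) hk
        · exact h
        · simpa using h2 k (by omega)
    · rintro ⟨_ | m, hm, h1, h2⟩
      · exact Or.inl h1
      · refine Or.inr ⟨h2 0 (by omega), m, by simpa using hm, by simpa using h1, fun k hk => ?_⟩
        simpa using h2 (k + 1) (by omega)

theorem D.toLTL {A : Type} {K : List A → Prop} (hK : D K) :
    ∃ φ : LTL A, ∀ (w : List A) (n : ℕ), n < w.length →
      (LTL.sat (lModel w) n φ ↔ K (w.drop n)) := by
  induction hK with
  | univ => exact ⟨.top, by simp [LTL.sat]⟩
  | letter a => exact ⟨.var a, by simp [LTL.sat, lModel]⟩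
  | compl _ ih =>
    obtain ⟨φ, hφ⟩ := ih
    exact ⟨.not φ, fun w n hn => not_congr (hφ w n hn)⟩
  | inter _ _ ih1 ih2 =>
    obtain ⟨φ, hφ⟩ := ih1
    obtain ⟨ψ, hψ⟩ := ih2
    exact ⟨.and φ ψ, fun w n hn => and_congr (hφ w n hn) (hψ w n hn)⟩
  | @next K _ ih =>
    obtain ⟨φ, hφ⟩ := ih
    have step : ∀ (w : List A) (n : ℕ), n < w.length →
        ((∃ a w', w.drop n = a :: w' ∧ K w') ↔ K (w.drop (n + 1))) := by
      intro w n hn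
      have e := List.drop_eq_getElem_cons hn
      constructor
      · rintro ⟨a, w', h1, h2⟩
        rw [e] at h1
        cases h1
        exact h2
      · exact fun hk => ⟨_, _, e, hk⟩
    by_cases hb : K []
    · refine ⟨.not (.next (.not φ)), fun w n hn => ?_⟩
      refine Iff.trans ?_ (step w n hn).symm
      simp only [LTL.sat, lModel]
      by_cases h : n + 1 < w.length
      · have := hφ w (n + 1) h
        have h' : n < w.length - 1 := by omega
        simp only [lModel] at this
        simp [this, h']
      · have h' : ¬ n < w.length - 1 := by omega
        rw [List.drop_eq_nil_of_le (by omega)]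
        simp [h', hb]
    · refine ⟨.next φ, fun w n hn => ?_⟩
      refine Iff.trans ?_ (step w n hn).symm
      simp only [LTL.sat, lModel]
      by_cases h : n + 1 < w.length
      · have := hφ w (n + 1) h
        have h' : n < w.length - 1 := by omega
        simp only [lModel] at this
        simp [this, h']
      · have h' : ¬ n < w.length - 1 := by omega
        rw [List.drop_eq_nil_of_le (by omega)]
        simp [h', hb]
  | @unt K L _ _ ih1 ih2 =>
    obtain ⟨φ, hφ⟩ := ih1
    obtain ⟨ψ, hψ⟩ := ih2
    -- strict part: finitely many steps to a nonempty suffix, or to the empty suffix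
    obtain ⟨χ, hχ⟩ : ∃ χ : LTL A, ∀ (w : List A) (n : ℕ), n < w.length →
        (LTL.sat (lModel w) n χ ↔
          (L [] ∧ ∀ m, n < m → m < w.length → K (w.drop m))) := by
      by_cases hb : L []
      · refine ⟨.not (.ev (.not φ)), fun w n hn => ?_⟩
        simp only [LTL.sat]
        constructor
        · intro h
          refine ⟨hb, fun m h1 h2 => ?_⟩
          rw [← hφ w m h2]
          by_contra h3
          exact h ⟨m, h1, by simp only [lModel]; omega, h3⟩
        · rintro ⟨_, h⟩ ⟨m, h1, h2, h3⟩
          simp only [lModel] at h2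
          exact h3 ((hφ w m (by omega)).2 (h m h1 (by omega)))
      · refine ⟨.not .top, fun w n hn => ?_⟩
        simp [LTL.sat, hb]
    refine ⟨.not (.and (.not ψ) (.not (.and φ (.not (.and (.not (.untl ψ φ)) (.not χ)))))),
      fun w n hn => ?_⟩
    have e : LTL.sat (lModel w) n
        (.not (.and (.not ψ) (.not (.and φ (.not (.and (.not (.untl ψ φ)) (.not χ))))))) ↔
        (LTL.sat (lModel w) n ψ ∨ (LTL.sat (lModel w) n φ ∧
          (LTL.sat (lModel w) n (.untl ψ φ) ∨ LTL.sat (lModel w) n χ))) := by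
      generalize hu : LTL.untl ψ φ = υ
      simp only [LTL.sat]
      tauto
    rw [e, unt_iff, hψ w n hn, hφ w n hn, hχ w n hn]
    simp only [LTL.sat, List.drop_drop, List.length_drop]
    constructor
    · rintro (h | ⟨h, ⟨m, h1, h2, h3, h4⟩ | ⟨h1, h2⟩⟩)
      · exact ⟨0, by omega, by simpa using h, by simp⟩
      · simp only [lModel] at h2
        refine ⟨m - n, by omega, ?_, fun k hk => ?_⟩
        · rw [show n + (m - n) = m by omega]
          exact (hψ w m (by omega)).1 h3
        · rcases Nat.eq_zero_or_pos k with rfl | hk0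
          · simpa using h
          · exact (hφ w _ (by omega)).1 (h4 (n + k) (by omega) (by omega))
      · refine ⟨w.length - n, by omega, ?_, fun k hk => ?_⟩
        · rw [List.drop_eq_nil_of_le (by omega)]
          exact h1
        · rcases Nat.eq_zero_or_pos k with rfl | hk0
          · simpa using h
          · exact h2 (n + k) (by omega) (by omega)
    · rintro ⟨m, hm, h1, h2⟩
      rcases Nat.eq_zero_or_pos m with rfl | hm0
      · exact Or.inl (by simpa using h1)
      · refine Or.inr ⟨by simpa using h2 0 hm0, ?_⟩
        by_cases hm' : n + m < w.length
        · refine Or.inl ⟨n + m, by omega, by simp only [lModel]; omega, (hψ w _ hm').2 h1,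
            fun k hk1 hk2 => (hφ w k (by omega)).2 ?_⟩
          have := h2 (k - n) (by omega)
          rwa [show n + (k - n) = k by omega] at this
        · refine Or.inr ⟨?_, fun k hk1 hk2 => ?_⟩
          · rwa [List.drop_eq_nil_of_le (by omega)] at h1
          · have := h2 (k - n) (by omega)
            rwa [show n + (k - n) = k by omega] at this

/-! ### Relativization to the prefix before the first `c` -/

open Classical in
noncomputable def tw {A : Type} (c : A) : List A → List A
  | [] => []
  | a :: w => if a = c then [] else a :: tw c w

theorem tw_self {A : Type} (c : A) (w : List A) : tw c (c :: w) = [] := by simp [tw]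

theorem tw_ne {A : Type} {c a : A} (h : a ≠ c) (w : List A) : tw c (a :: w) = a :: tw c w := by
  simp [tw, h]

theorem D.tw {A : Type} (c : A) {K : List A → Prop} (hK : D K) :
    D (fun w => K (Kamp.tw c w)) := by
  induction hK with
  | univ => exact D.univ
  | letter a =>
    by_cases hac : a = c
    · refine (D.const False).congr (fun w => ?_)
      cases w with
      | nil => simp [Kamp.tw]
      | cons b w =>
        by_cases hb : b = c
        · subst hb; simp [tw_self]
        · rw [tw_ne hb]; simp [hac, hb]
    · refine (D.letter a).congr (fun w => ?_)
      cases w with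
      | nil => simp [Kamp.tw]
      | cons b w =>
        by_cases hb : b = c
        · subst hb; simp [tw_self, Ne.symm hac]
        · rw [tw_ne hb]; simp
  | compl _ ih => exact ih.compl
  | inter _ _ ih1 ih2 => exact ih1.inter ih2
  | next _ ih =>
    refine (ih.next.inter (D.letter c).compl).congr (fun w => ?_)
    cases w with
    | nil => simp [Kamp.tw]
    | cons b w =>
      by_cases hb : b = c
      · subst hb; simp [tw_self]
      · rw [tw_ne hb]; simp [hb]
  | unt _ _ ih1 ih2 =>
    refine ((ih1.inter (D.letter c).compl).unt ih2).congr (fun w => ?_)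
    induction w with
    | nil => simp [Kamp.tw, Unt]
    | cons b w ih =>
      by_cases hb : b = c
      · subst hb; simp [tw_self, Unt]
      · simp [tw_ne hb, hb, Unt, ih]

theorem D.mem {A : Type} (c : A) : D (fun w : List A => c ∈ w) := by
  refine (D.univ.unt (D.letter c)).congr (fun w => ?_)
  induction w with
  | nil => simp [Unt]
  | cons b w ih => simp [Unt, ← ih, eq_comm]

/-! ### Block decomposition -/

section blocks

variable {A M : Type} [Monoid M] (h : A → M) (c : A)

open Classical in
/-- The list of values of the blocks that are closed by an occurrence of `c`. -/
noncomputable def sg : List A → List M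
  | [] => []
  | a :: w => if a = c then 1 :: sg w else
      match sg w with
      | [] => []
      | t :: ts => (h a * t) :: ts

open Classical in
/-- The value of the last block. -/
noncomputable def lt : List A → M
  | [] => 1
  | a :: w => if c ∈ a :: w then lt w else h a * lt w

/-- Evaluation of a list of closed blocks. -/
def ev (x : M) : List M → M
  | [] => 1
  | t :: ts => t * x * ev x ts

theorem sg_self (w : List A) : sg h c (c :: w) = 1 :: sg h c w := by simp [sg]

theorem sg_ne_nil {a : A} (ha : a ≠ c) {w : List A} (hw : sg h c w = []) :
    sg h c (a :: w) = [] := by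
  simp [sg, ha, hw]

theorem sg_ne_cons {a : A} (ha : a ≠ c) {w : List A} {t : M} {ts : List M}
    (hw : sg h c w = t :: ts) : sg h c (a :: w) = (h a * t) :: ts := by
  simp [sg, ha, hw]

theorem sg_nil_iff (w : List A) : sg h c w = [] ↔ c ∉ w := by
  induction w with
  | nil => simp [sg]
  | cons a w ih =>
    by_cases ha : a = c
    · subst ha; simp [sg_self]
    · rcases hw : sg h c w with _ | ⟨t, ts⟩
      · simp [sg_ne_nil h c ha hw, ih.1 hw, Ne.symm ha]
      · have : c ∈ w := by
          by_contra hc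
          rw [ih.2 hc] at hw
          cases hw
        simp [sg_ne_cons h c ha hw, this]

theorem prod_eq (w : List A) : (w.map h).prod = ev (h c) (sg h c w) * lt h c w := by
  induction w with
  | nil => simp [sg, lt, ev]
  | cons a w ih =>
    rw [List.map_cons, List.prod_cons, ih]
    by_cases ha : a = c
    · subst ha
      simp [sg_self, ev, lt, mul_assoc]
    · rcases hw : sg h c w with _ | ⟨t, ts⟩
      · have hc := (sg_nil_iff h c w).1 hw
        simp [sg_ne_nil h c ha hw, ev, lt, hc, Ne.symm ha]
      · have hc : c ∈ w := by
          by_contra hc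
          rw [(sg_nil_iff h c w).2 hc] at hw
          cases hw
        simp [sg_ne_cons h c ha hw, ev, lt, hc, mul_assoc]

theorem sg_head (w : List A) (t : M) :
    (sg h c w).head? = some t ↔ c ∈ w ∧ ((tw c w).map h).prod = t := by
  induction w generalizing t with
  | nil => simp [sg]
  | cons a w ih =>
    by_cases ha : a = c
    · subst ha; simp [sg_self, tw_self]
    · rcases hw : sg h c w with _ | ⟨s, ts⟩
      · have hc := (sg_nil_iff h c w).1 hw
        simp [sg_ne_nil h c ha hw, hc, Ne.symm ha]
      · have := (ih s).1 (by simp [hw])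
        simp [sg_ne_cons h c ha hw, tw_ne ha, this.1, this.2]

theorem unt_sg (K L : List M → Prop) (K' : List A → Prop)
    (hK : ∀ w, K' (c :: w) ↔ K (sg h c w)) (hK' : ∀ a w, a ≠ c → K' (a :: w)) (w : List A) :
    Unt K' (fun w => w.head? = some c ∧ ∃ a w', w = a :: w' ∧ L (sg h c w')) w ↔
      ∃ t ts, sg h c w = t :: ts ∧ Unt K L ts := by
  induction w with
  | nil => simp [Unt, sg]
  | cons a w ih =>
    by_cases ha : a = c
    · subst ha
      simp only [Unt, ih, hK, sg_self]
      rcases hw : sg h a w with _ | ⟨s, ts⟩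
      · simp [hw, Unt]
      · simp [hw, Unt]
    · simp only [Unt, ih, hK' a w ha]
      rcases hw : sg h c w with _ | ⟨s, ts⟩
      · simp [sg_ne_nil h c ha hw, ha]
      · simp [sg_ne_cons h c ha hw, ha]

theorem unt_false {B : Type} (L : List B → Prop) (w : List B) :
    Unt (fun _ => False) L w ↔ L w := by
  cases w <;> simp [Unt]

theorem D.sg (hb : ∀ t : M, D (fun w : List A => ((Kamp.tw c w).map h).prod = t))
    {K : List M → Prop} (hK : D K) : D (fun w => K (Kamp.sg h c w)) := by
  induction hK with
  | univ => exact D.univ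
  | letter t => exact ((D.mem c).inter (hb t)).congr (fun w => sg_head h c w t)
  | compl _ ih => exact ih.compl
  | inter _ _ ih1 ih2 => exact ih1.inter ih2
  | @next K _ ih =>
    refine ((D.letter c).compl.unt ((D.letter c).inter ih.next)).congr (fun w => ?_)
    rw [unt_sg h c (fun _ => False) K _ (by simp) (by simp +contextual)]
    simp only [unt_false]
  | @unt K L _ _ ih1 ih2 =>
    refine (ih2.or (ih1.inter (((D.letter c).compl.or ih1.next).unt
      ((D.letter c).inter ih2.next)))).congr (fun w => ?_)
    rw [unt_sg h c K L _ (by simp) (by simp +contextual)]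
    rcases hw : Kamp.sg h c w with _ | ⟨s, ts⟩
    · simp [Unt]
    · simp [Unt]

theorem tw_of_not_mem {w : List A} (hw : c ∉ w) : tw c w = w := by
  induction w with
  | nil => rfl
  | cons a w ih =>
    simp only [List.mem_cons, not_or] at hw
    rw [tw_ne (Ne.symm hw.1), ih hw.2]

theorem lt_of_not_mem {w : List A} (hw : c ∉ w) : lt h c w = (w.map h).prod := by
  rw [prod_eq h c, (sg_nil_iff h c w).2 hw]
  simp [ev]

theorem D.lt (hb : ∀ t : M, D (fun w : List A => ((Kamp.tw c w).map h).prod = t)) (s : M) :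
    D (fun w => Kamp.lt h c w = s) := by
  refine (((D.mem c).compl.inter (hb s)).or (D.univ.unt ((D.letter c).inter
    ((D.mem c).compl.inter (hb s)).next))).congr (fun w => ?_)
  have key : ∀ w : List A, Unt (fun _ => True) (fun w => w.head? = some c ∧
      ∃ a w', w = a :: w' ∧ c ∉ w' ∧ ((Kamp.tw c w').map h).prod = s) w ↔
      c ∈ w ∧ Kamp.lt h c w = s := by
    intro w
    induction w with
    | nil => simp [Unt]
    | cons a w ih =>
      simp only [Unt, ih]
      by_cases hc : c ∈ w
      · simp [hc, Kamp.lt]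
      · by_cases ha : a = c
        · subst ha
          simp [hc, Kamp.lt, tw_of_not_mem a hc, lt_of_not_mem h a hc]
        · simp [hc, ha, Ne.symm ha]
  rw [key]
  by_cases hc : c ∈ w
  · simp [hc]
  · simp [hc, lt_of_not_mem h c hc, tw_of_not_mem c hc]

end blocks

/-! ### The local divisor -/

/-- The local divisor of `M` at `x`. -/
def LD (M : Type) [Monoid M] (x : M) : Type := {z : M // (∃ p, z = p * x) ∧ ∃ q, z = x * q}

namespace LD

variable {M : Type} [Monoid M] {x : M}

noncomputable def lft (z : LD M x) : M := z.2.1.choose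
theorem lft_spec (z : LD M x) : z.1 = lft z * x := z.2.1.choose_spec

noncomputable instance : Mul (LD M x) where
  mul z z' := ⟨lft z * z'.1, by
    obtain ⟨p, hp⟩ := z'.2.1
    exact ⟨lft z * p, by rw [hp, mul_assoc]⟩, by
    obtain ⟨q, hq⟩ := z'.2.2
    obtain ⟨r, hr⟩ := z.2.2
    exact ⟨r * q, by rw [hq, ← mul_assoc, ← lft_spec, hr, mul_assoc]⟩⟩

theorem mul_val (z z' : LD M x) : (z * z').1 = lft z * z'.1 := rfl

theorem mul_val_right (z z' : LD M x) {q : M} (hq : z'.1 = x * q) : (z * z').1 = z.1 * q := by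
  rw [mul_val, hq, ← mul_assoc, ← lft_spec]

theorem mul_val_left (z z' : LD M x) {p : M} (hp : z.1 = p * x) : (z * z').1 = p * z'.1 := by
  obtain ⟨q, hq⟩ := z'.2.2
  rw [mul_val_right z z' hq, hp, hq, mul_assoc]

noncomputable instance : Monoid (LD M x) where
  one := ⟨x, ⟨1, by simp⟩, ⟨1, by simp⟩⟩
  mul_assoc a b d := by
    apply Subtype.ext
    obtain ⟨q, hq⟩ := d.2.2
    rw [mul_val_right _ d hq, mul_val, mul_val, mul_val_right _ d hq, mul_assoc]
  one_mul a := by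
    apply Subtype.ext
    exact (mul_val_left _ a (p := 1) (one_mul x).symm).trans (one_mul _)
  mul_one a := by
    apply Subtype.ext
    exact (mul_val_right a _ (q := 1) (mul_one x).symm).trans (mul_one _)

theorem one_val : (1 : LD M x).1 = x := rfl

instance [Finite M] : Finite (LD M x) := inferInstanceAs (Finite {z : M // _})

theorem aper (hM : Aper M) : Aper (LD M x) := by
  intro z
  obtain ⟨q, hq⟩ := z.2.2
  have hp : ∀ n : ℕ, (z ^ n).1 = x * q ^ n := by
    intro n
    induction n with
    | zero => rw [pow_zero, pow_zero, mul_one]; rfl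
    | succ n ih => rw [pow_succ, mul_val_right _ z hq, ih, pow_succ, mul_assoc]
  obtain ⟨n, hn⟩ := hM q
  refine ⟨n, Subtype.ext ?_⟩
  rw [hp, hp, hn]

theorem card_lt [Finite M] (hM : Aper M) (hx : x ≠ 1) : Nat.card (LD M x) < Nat.card M := by
  refine Finite.card_subtype_lt (p := fun z : M => (∃ p, z = p * x) ∧ ∃ q, z = x * q) (x := 1) ?_
  rintro ⟨⟨p, hp⟩, -⟩
  apply hx
  obtain ⟨n, hn⟩ := hM x
  have h1 : ∀ k : ℕ, p ^ k * x ^ k = 1 := by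
    intro k
    induction k with
    | zero => simp
    | succ k ih =>
      rw [pow_succ, pow_succ', mul_assoc, ← mul_assoc p, ← hp, one_mul, ih]
  calc x = p ^ n * x ^ n * x := by rw [h1, one_mul]
    _ = p ^ n * x ^ n := by rw [mul_assoc, ← pow_succ, hn]
    _ = 1 := h1 n

def gen (x : M) (t : M) : LD M x := ⟨x * t * x, ⟨x * t, rfl⟩, ⟨t * x, mul_assoc _ _ _⟩⟩

theorem gen_prod (ts : List M) : ((ts.map (gen x)).prod).1 = x * ev x ts := by
  induction ts with
  | nil => exact (mul_one x).symm
  | cons t ts ih =>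
    rw [List.map_cons, List.prod_cons, mul_val_left (gen x t) _ (p := x * t) rfl, ih]
    simp [ev, mul_assoc]

end LD

theorem D.ev {M : Type} [Monoid M] [Finite M] (x : M)
    (hD : ∀ y : LD M x, D (fun ts : List M => (ts.map (LD.gen x)).prod = y)) (e : M) :
    D (fun ts : List M => Kamp.ev x ts = e) := by
  have h1 : D (fun ts : List M => ∃ t : M, ts.head? = some t ∧ ∃ y : LD M x, t * y.1 = e ∧
      ∃ a ts', ts = a :: ts' ∧ (ts'.map (LD.gen x)).prod = y) :=
    D.exFin fun t => (D.letter t).inter (D.exFin fun y => (D.const _).inter (hD y).next)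
  have h2 : D (fun ts : List M => (∃ t : M, ts.head? = some t ∧ True) ) :=
    D.exFin fun t => (D.letter t).inter (D.const _)
  refine (h1.or (h2.compl.inter (D.const (1 = e)))).congr (fun ts => ?_)
  cases ts with
  | nil => simp [Kamp.ev]
  | cons t ts =>
    constructor
    · intro h
      refine Or.inl ⟨t, rfl, (ts.map (LD.gen x)).prod, ?_, t, ts, rfl, rfl⟩
      rw [LD.gen_prod, ← h]
      simp [Kamp.ev, mul_assoc]
    · rintro (⟨t', ht, y, hy, a, ts', h3, h4⟩ | ⟨h3, -⟩)
      · cases h3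
        obtain rfl : t = t' := by simpa using ht
        rw [← hy, ← h4, LD.gen_prod]
        simp [Kamp.ev, mul_assoc]
      · exact absurd ⟨t, rfl, trivial⟩ h3

theorem main (N : ℕ) : ∀ (M : Type) [Monoid M] [Finite M], Aper M → Nat.card M ≤ N →
    ∀ (k : ℕ) (A : Type) [Finite A] (h : A → M), Set.ncard {a | h a ≠ 1} ≤ k →
    ∀ m : M, D (fun w : List A => (w.map h).prod = m) := by
  classical
  induction N with
  | zero =>
    intro M _ _ _ hc
    have := Nat.card_pos (α := M)
    omega
  | succ N ihN =>
    intro M _ _ hM hcard k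
    induction k with
    | zero =>
      intro A _ h hk m
      have hk' : {a | h a ≠ 1} = ∅ := (Set.ncard_eq_zero (Set.toFinite _)).1 (Nat.le_zero.1 hk)
      have h1 : ∀ a, h a = 1 := by
        intro a
        by_contra ha
        have : a ∈ {a | h a ≠ 1} := ha
        rw [hk'] at this
        exact this
      refine (D.const (1 = m)).congr (fun w => ?_)
      have : (w.map h).prod = 1 := by
        induction w with
        | nil => rfl
        | cons a w ih => rw [List.map_cons, List.prod_cons, h1, ih, one_mul]
      rw [this]
    | succ k ihk =>
      intro A _ h hk m
      by_cases hle : Set.ncard {a | h a ≠ 1} ≤ k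
      · exact ihk A h hle m
      obtain ⟨c, hc⟩ : ∃ c, h c ≠ 1 := by
        by_contra hcon
        push Not at hcon
        apply hle
        have : {a | h a ≠ 1} = ∅ := by
          ext a
          simp [hcon a]
        rw [this]
        simp
      have hb : ∀ t : M, D (fun w : List A => ((Kamp.tw c w).map h).prod = t) := by
        intro t
        have h1 := ihk A (Function.update h c 1) (by
          have : Set.ncard {a | Function.update h c 1 a ≠ 1} < Set.ncard {a | h a ≠ 1} := by
            apply Set.ncard_lt_ncard _ (Set.toFinite _)
            refine ⟨fun a ha => ?_, fun hs => ?_⟩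
            · change Function.update h c 1 a ≠ 1 at ha
              change h a ≠ 1
              by_cases hac : a = c
              · subst hac; simp at ha
              · simpa [hac] using ha
            · have : Function.update h c 1 c ≠ 1 := hs hc
              simp at this
          omega) t
        refine (h1.tw c).congr (fun w => ?_)
        have : (Kamp.tw c w).map h = (Kamp.tw c w).map (Function.update h c 1) := by
          induction w with
          | nil => rfl
          | cons a w ih =>
            by_cases ha : a = c
            · subst ha; simp [tw_self]
            · simp only [tw_ne ha, List.map_cons, ih, Function.update_of_ne ha]
        rw [this]
      have hLD : ∀ y : LD M (h c), D (fun ts : List M => (ts.map (LD.gen (h c))).prod = y) :=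
        ihN (LD M (h c)) (LD.aper hM) (by have := LD.card_lt hM hc; omega) _ M (LD.gen (h c)) le_rfl
      have h1 : D (fun w : List A => ∃ e s : M, e * s = m ∧
          (Kamp.ev (h c) (Kamp.sg h c w) = e ∧ Kamp.lt h c w = s)) :=
        D.exFin fun e => D.exFin fun s => (D.const _).inter
          ((D.sg h c hb (D.ev (h c) hLD e)).inter (D.lt h c hb s))
      refine h1.congr (fun w => ?_)
      rw [prod_eq h c]
      constructor
      · exact fun hw => ⟨_, _, hw, rfl, rfl⟩
      · rintro ⟨_, _, hw, rfl, rfl⟩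
        exact hw

theorem ltl_of_fo {A : Type} [Finite A] {L : Set (List A)} (h : FODefinable L) :
    LTLDefinable L := by
  obtain ⟨θ, rfl⟩ := h
  obtain ⟨M, i1, i2, hM, g, S, hS⟩ := recog_sentence θ
  have hD : D (fun w : List A => ∃ m : M, m ∈ S ∧ (w.map g).prod = m) :=
    D.exFin fun m => (D.const _).inter (main _ M hM le_rfl _ A g le_rfl m)
  obtain ⟨φ, hφ⟩ := hD.toLTL
  refine ⟨φ, ?_⟩
  have key : ∀ (a : A) (l : List A),
      LTL.sat (wModel a l) 0 φ ↔ SatWord (a :: l) θ := by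
    intro a l
    have h1 := hφ (a :: l) 0 (by simp)
    rw [hS]
    refine Iff.trans h1 ?_
    simp
  ext w
  constructor
  · rintro ⟨hw, hs⟩
    cases w with
    | nil => exact absurd rfl hw
    | cons a l => exact ⟨a, l, rfl, (key a l).2 hs⟩
  · rintro ⟨a, l, rfl, hs⟩
    exact ⟨by simp, (key a l).1 hs⟩

end Kamp

/-- A language of nonempty words is FO(<)-definable iff it is LTL-definable. -/
theorem FO_definable_iff_LTL_definable {A : Type} [Fintype A]
    (L : Set (List A)) (hL : [] ∉ L) :
    FODefinable L ↔ LTLDefinable L :=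
  ⟨Kamp.ltl_of_fo, Kamp.fo_of_ltl⟩
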